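/- arXiv:1711.01582 — 3 statements merged into one kernel-verified Lean document; each statement's English description precedes it below -/
import Mathlib

section
/- Entropy production identity for thermoviscoelasticity: Let ψ = ψ(F,θ) be C² on M^{3×3} × (0,∞) and set Σ = ∂ψ/∂F, η = −∂ψ/∂θ, e = ψ + θη. Let (F, v, θ) be C² fields on ℝ³ × ℝ⁺ with θ > 0, let Z, Q be C¹ fields (matrix- and vector-valued respectively) and r continuous, and suppose the thermoviscoelasticity system holds pointwise: ∂_t F_{iα} = ∂_α v_i; ∂_t v_i − ∂_α Σ_{iα}(F,θ) = ∂_α Z_{iα}; ∂_t(½|v|² + e(F,θ)) − ∂_α(Σ_{iα}(F,θ) v_i) = ∂_α(Z_{iα} v_i) + ∂_α Q_α + r. Then the entropy production identity holds pointwise: ∂_t η(F,θ) − ∂_α(Q_α/θ) = ∇θ·Q/θ² + (∂_α v_i) Z_{iα}/θ + r/θ (summation over repeated indices). -/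
open Real MeasureTheory Filter Set Topology ENNReal NNReal

noncomputable section

abbrev Vec3 := Fin 3 → ℝ
abbrev Mat3 := Fin 3 → Fin 3 → ℝ
abbrev Xi := Mat3 × Mat3 × ℝ
abbrev Idx := (Fin 3 × Fin 3) ⊕ ((Fin 3 × Fin 3) ⊕ Unit)
abbrev FullState := Xi × Vec3 × ℝ

/-- Levi-Civita symbol on three indices. -/
def eps3 (i j k : Fin 3) : ℝ :=
  if (i, j, k) = (0, 1, 2) ∨ (i, j, k) = (1, 2, 0) ∨ (i, j, k) = (2, 0, 1) then 1
  else if (i, j, k) = (2, 1, 0) ∨ (i, j, k) = (1, 0, 2) ∨ (i, j, k) = (0, 2, 1) then -1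
  else 0

/-- Cofactor matrix (cof F)_{iα} = (1/2) ε_{ijk} ε_{αβγ} F_{jβ} F_{kγ}. -/
def cof3 (F : Mat3) : Mat3 := fun i α =>
  (1/2) * ∑ j, ∑ k, ∑ β, ∑ γ, eps3 i j k * eps3 α β γ * F j β * F k γ

/-- det F = (1/6) ε_{ijk} ε_{αβγ} F_{iα} F_{jβ} F_{kγ}. -/
def det3 (F : Mat3) : ℝ :=
  (1/6) * ∑ i, ∑ j, ∑ k, ∑ α, ∑ β, ∑ γ,
    eps3 i j k * eps3 α β γ * F i α * F j β * F k γ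

/-- The vector of null Lagrangians Φ(F) = (F, cof F, det F). -/
def Phi3 (F : Mat3) : Xi := (F, cof3 F, det3 F)

/-- Component ξ^B of ξ ∈ ℝ^19. -/
def xiComp (ξ : Xi) : Idx → ℝ
  | .inl (i, α) => ξ.1 i α
  | .inr (.inl (i, α)) => ξ.2.1 i α
  | .inr (.inr _) => ξ.2.2

def updMat (F : Mat3) (i α : Fin 3) (s : ℝ) : Mat3 :=
  Function.update F i (Function.update (F i) α s)

/-- Update component B of ξ to value s. -/
def xiUpd (ξ : Xi) : Idx → ℝ → Xi
  | .inl (i, α), s => (updMat ξ.1 i α s, ξ.2)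
  | .inr (.inl (i, α)), s => (ξ.1, updMat ξ.2.1 i α s, ξ.2.2)
  | .inr (.inr _), s => (ξ.1, ξ.2.1, s)

/-- ∂Φ^B/∂F_{iα}(F). -/
def dPhi (B : Idx) (i α : Fin 3) (F : Mat3) : ℝ :=
  deriv (fun s => xiComp (Phi3 (updMat F i α s)) B) (F i α)

/-- Partial derivative ∂ψ̂/∂ξ^B of a function ψ̂(ξ, θ). -/
def dXi (B : Idx) (ψ : Xi → ℝ → ℝ) (ξ : Xi) (θ : ℝ) : ℝ :=
  deriv (fun s => ψ (xiUpd ξ B s) θ) (xiComp ξ B)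

/-- Partial derivative ∂ψ̂/∂θ. -/
def dTh (ψ : Xi → ℝ → ℝ) (ξ : Xi) (θ : ℝ) : ℝ :=
  deriv (fun s => ψ ξ s) θ

/-- η̂(ξ,θ) = −∂_θ ψ̂(ξ,θ). -/
def etaHat (ψ : Xi → ℝ → ℝ) (ξ : Xi) (θ : ℝ) : ℝ := -(dTh ψ ξ θ)

/-- ê(ξ,θ) = ψ̂(ξ,θ) − θ ∂_θ ψ̂(ξ,θ). -/
def eHat (ψ : Xi → ℝ → ℝ) (ξ : Xi) (θ : ℝ) : ℝ := ψ ξ θ - θ * dTh ψ ξ θ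

/-- Spatial partial derivative ∂_α of a space-time field. -/
def pdx (α : Fin 3) (f : Vec3 → ℝ → ℝ) (x : Vec3) (t : ℝ) : ℝ :=
  deriv (fun s => f (Function.update x α s) t) (x α)

/-- Time derivative ∂_t of a space-time field. -/
def pdt (f : Vec3 → ℝ → ℝ) (x : Vec3) (t : ℝ) : ℝ :=
  deriv (fun s => f x s) t

def mnorm (F : Mat3) : ℝ := Real.sqrt (∑ i, ∑ j, (F i j)^2)
def vnorm (v : Vec3) : ℝ := Real.sqrt (∑ i, (v i)^2)

/-- |ξ|_{p,q,r} = |F|^p + |ζ|^q + |w|^r. -/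
def xiNorm (p q r : ℝ) (ξ : Xi) : ℝ :=
  mnorm ξ.1 ^ p + mnorm ξ.2.1 ^ q + |ξ.2.2| ^ r

/-- The compact set Γ_{M,δ}. -/
def Gamma (M δ : ℝ) : Set FullState :=
  {U | mnorm U.1.1 ≤ M ∧ mnorm U.1.2.1 ≤ M ∧ |U.1.2.2| ≤ M ∧
       vnorm U.2.1 ≤ M ∧ δ ≤ U.2.2 ∧ U.2.2 ≤ M}

/-- Relative free energy ψ̂(ξ,θ|ξ̄,θ̄). -/
def psiRel (ψ : Xi → ℝ → ℝ) (ξ : Xi) (θ : ℝ) (ξ' : Xi) (θ' : ℝ) : ℝ :=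
  ψ ξ θ - ψ ξ' θ' - (∑ B : Idx, dXi B ψ ξ' θ' * (xiComp ξ B - xiComp ξ' B))
    + etaHat ψ ξ' θ' * (θ - θ')

/-- Relative entropy function η̂(ξ,θ|ξ̄,θ̄). -/
def etaRel (ψ : Xi → ℝ → ℝ) (ξ : Xi) (θ : ℝ) (ξ' : Xi) (θ' : ℝ) : ℝ :=
  etaHat ψ ξ θ - etaHat ψ ξ' θ'
    - (∑ B : Idx, dXi B (etaHat ψ) ξ' θ' * (xiComp ξ B - xiComp ξ' B))
    - dTh (etaHat ψ) ξ' θ' * (θ - θ')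

/-- Relative stress (∂ψ̂/∂ξ^B)(ξ,θ|ξ̄,θ̄). -/
def dXiRel (B : Idx) (ψ : Xi → ℝ → ℝ) (ξ : Xi) (θ : ℝ) (ξ' : Xi) (θ' : ℝ) : ℝ :=
  dXi B ψ ξ θ - dXi B ψ ξ' θ'
    - (∑ A : Idx, dXi A (dXi B ψ) ξ' θ' * (xiComp ξ A - xiComp ξ' A))
    - dTh (dXi B ψ) ξ' θ' * (θ - θ')

/-- Relative entropy I(ξ,v,θ|ξ̄,v̄,θ̄). -/
def relEnt (ψ : Xi → ℝ → ℝ) (ξ : Xi) (v : Vec3) (θ : ℝ)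
    (ξ' : Xi) (v' : Vec3) (θ' : ℝ) : ℝ :=
  psiRel ψ ξ θ ξ' θ' + (1/2) * (∑ i, (v i - v' i)^2)
    + (etaHat ψ ξ θ - etaHat ψ ξ' θ') * (θ - θ')

/-- ψ̂ is C³ on ℝ^19 × (0,∞). -/
def PsiC3 (ψ : Xi → ℝ → ℝ) : Prop :=
  ContDiffOn ℝ 3 (fun p : Xi × ℝ => ψ p.1 p.2) (Set.univ ×ˢ Set.Ioi (0:ℝ))

/-- ∇²_ξ ψ̂ > 0 and ∂_θ η̂ > 0. -/
def PsiConvex (ψ : Xi → ℝ → ℝ) : Prop :=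
  ∀ ξ : Xi, ∀ θ : ℝ, 0 < θ →
    (∀ u : Idx → ℝ, u ≠ 0 →
      0 < ∑ A : Idx, ∑ B : Idx, dXi A (dXi B ψ) ξ θ * u A * u B) ∧
    0 < dTh (etaHat ψ) ξ θ

def gradFnorm (ψ : Xi → ℝ → ℝ) (ξ : Xi) (θ : ℝ) : ℝ :=
  Real.sqrt (∑ i, ∑ α, (dXi (.inl (i, α)) ψ ξ θ)^2)
def gradZnorm (ψ : Xi → ℝ → ℝ) (ξ : Xi) (θ : ℝ) : ℝ :=
  Real.sqrt (∑ i, ∑ α, (dXi (.inr (.inl (i, α))) ψ ξ θ)^2)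
def gradWnorm (ψ : Xi → ℝ → ℝ) (ξ : Xi) (θ : ℝ) : ℝ :=
  |dXi (.inr (.inr ())) ψ ξ θ|

/-- The growth conditions (gr.con.1)-(gr.con.3). -/
def GrowthCond (ψ : Xi → ℝ → ℝ) (c p q r ℓ : ℝ) : Prop :=
  0 < c ∧
  (∀ ξ : Xi, ∀ θ : ℝ, 0 < θ →
    c * (xiNorm p q r ξ + θ ^ ℓ) - c ≤ eHat ψ ξ θ ∧
    eHat ψ ξ θ ≤ c * (xiNorm p q r ξ + θ ^ ℓ) + c) ∧
  (∀ ε : ℝ, 0 < ε → ∃ R : ℝ, ∀ ξ : Xi, ∀ θ : ℝ, 0 < θ →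
    R < xiNorm p q r ξ + θ ^ ℓ →
    gradFnorm ψ ξ θ + gradZnorm ψ ξ θ ^ (p/(p-1)) + gradWnorm ψ ξ θ ^ (p/(p-2))
      ≤ ε * (xiNorm p q r ξ + θ ^ ℓ)) ∧
  (∀ ε : ℝ, 0 < ε → ∃ R : ℝ, ∀ ξ : Xi, ∀ θ : ℝ, 0 < θ →
    R < xiNorm p q r ξ + θ ^ ℓ →
    |dTh ψ ξ θ| ≤ ε * (xiNorm p q r ξ + θ ^ ℓ))

/-- The augmented thermoviscoelasticity system with fields (Z, Q, r), at a point (x,t). -/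
def AugSys (ψ : Xi → ℝ → ℝ) (ξf : Vec3 → ℝ → Xi) (vf : Vec3 → ℝ → Vec3)
    (θf : Vec3 → ℝ → ℝ) (Z : Vec3 → ℝ → Mat3) (Q : Vec3 → ℝ → Vec3)
    (r : Vec3 → ℝ → ℝ) (x : Vec3) (t : ℝ) : Prop :=
  (∀ B : Idx, pdt (fun y s => xiComp (ξf y s) B) x t
      = ∑ α, pdx α (fun y s => ∑ i, dPhi B i α (ξf y s).1 * vf y s i) x t) ∧
  (∀ i, pdt (fun y s => vf y s i) x t
      = ∑ α, pdx α (fun y s =>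
          ∑ B : Idx, dXi B ψ (ξf y s) (θf y s) * dPhi B i α (ξf y s).1) x t
        + ∑ α, pdx α (fun y s => Z y s i α) x t) ∧
  (pdt (fun y s => (1/2) * (∑ i, (vf y s i)^2) + eHat ψ (ξf y s) (θf y s)) x t
      = ∑ α, pdx α (fun y s => ∑ i,
          (∑ B : Idx, dXi B ψ (ξf y s) (θf y s) * dPhi B i α (ξf y s).1) * vf y s i) x t
        + ∑ α, pdx α (fun y s => ∑ i, Z y s i α * vf y s i) x t
        + ∑ α, pdx α (fun y s => Q y s α) x t + r x t) ∧
  (∀ i α β, pdx α (fun y s => (ξf y s).1 i β) x t = pdx β (fun y s => (ξf y s).1 i α) x t)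

/-- The entropy production identity for the augmented system. -/
def EntropyIdent (ψ : Xi → ℝ → ℝ) (ξf : Vec3 → ℝ → Xi) (vf : Vec3 → ℝ → Vec3)
    (θf : Vec3 → ℝ → ℝ) (Z : Vec3 → ℝ → Mat3) (Q : Vec3 → ℝ → Vec3)
    (r : Vec3 → ℝ → ℝ) (x : Vec3) (t : ℝ) : Prop :=
  pdt (fun y s => etaHat ψ (ξf y s) (θf y s)) x t
    - ∑ α, pdx α (fun y s => Q y s α / θf y s) x t
  = (∑ α, pdx α θf x t * Q x t α) / (θf x t)^2
    + (∑ α, ∑ i, pdx α (fun y s => vf y s i) x t * Z x t i α) / θf x t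
    + r x t / θf x t

/-- Newtonian viscous stress Z = μ ∇v. -/
def newtonianZ (μ : Mat3 → ℝ → ℝ) (ξf : Vec3 → ℝ → Xi) (vf : Vec3 → ℝ → Vec3)
    (θf : Vec3 → ℝ → ℝ) : Vec3 → ℝ → Mat3 :=
  fun x t i α => μ (ξf x t).1 (θf x t) * pdx α (fun y s => vf y s i) x t

/-- Fourier heat flux Q = k ∇θ. -/
def fourierQ (k : Mat3 → ℝ → ℝ) (ξf : Vec3 → ℝ → Xi)
    (θf : Vec3 → ℝ → ℝ) : Vec3 → ℝ → Vec3 :=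
  fun x t α => k (ξf x t).1 (θf x t) * pdx α θf x t

/-- The entropy identity for Newtonian viscosity and Fourier heat conduction (zero supply). -/
def EntropyIdentNF (ψ : Xi → ℝ → ℝ) (μ k : Mat3 → ℝ → ℝ) (ξf : Vec3 → ℝ → Xi)
    (vf : Vec3 → ℝ → Vec3) (θf : Vec3 → ℝ → ℝ) (x : Vec3) (t : ℝ) : Prop :=
  pdt (fun y s => etaHat ψ (ξf y s) (θf y s)) x t
    - ∑ α, pdx α (fun y s =>
        k (ξf y s).1 (θf y s) * pdx α θf y s / θf y s) x t
  = k (ξf x t).1 (θf x t) * (∑ α, (pdx α θf x t)^2) / (θf x t)^2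
    + μ (ξf x t).1 (θf x t) *
        (∑ α, ∑ i, (pdx α (fun y s => vf y s i) x t)^2) / θf x t

/-- Fundamental domain of the 3-torus. -/
def Box : Set Vec3 := Set.Icc 0 1

/-- Periodicity in the space variables with period 1. -/
def PeriodicX {E : Type*} (f : Vec3 → ℝ → E) : Prop :=
  ∀ (x : Vec3) (t : ℝ) (α : Fin 3), f (x + Pi.single α 1) t = f x t

/-- C^n regularity of a space-time field. -/
def FieldC {E : Type*} [NormedAddCommGroup E] [NormedSpace ℝ E]
    (n : ℕ) (f : Vec3 → ℝ → E) : Prop :=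
  ContDiff ℝ n (fun p : Vec3 × ℝ => f p.1 p.2)

/-- Spatial integral of the relative entropy at time t. -/
def relEntInt (ψ : Xi → ℝ → ℝ) (ξf : Vec3 → ℝ → Xi) (vf : Vec3 → ℝ → Vec3)
    (θf : Vec3 → ℝ → ℝ) (ξf' : Vec3 → ℝ → Xi) (vf' : Vec3 → ℝ → Vec3)
    (θf' : Vec3 → ℝ → ℝ) (t : ℝ) : ℝ :=
  ∫ x in Box, relEnt ψ (ξf x t) (vf x t) (θf x t) (ξf' x t) (vf' x t) (θf' x t)


/-- Spatial partial derivative of a static field. -/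
def pds (α : Fin 3) (f : Vec3 → ℝ) (x : Vec3) : ℝ :=
  deriv (fun s => f (Function.update x α s)) (x α)

/-- Deformation gradient ∇y of a static map y : ℝ³ → ℝ³. -/
def gradV (y : Vec3 → Vec3) (x : Vec3) : Mat3 :=
  fun i α => pds α (fun z => y z i) x

/-- ∂ψ/∂F_{iα} for ψ = ψ(F,θ). -/
def dFM (i α : Fin 3) (ψ : Mat3 → ℝ → ℝ) (F : Mat3) (θ : ℝ) : ℝ :=
  deriv (fun s => ψ (updMat F i α s) θ) (F i α)

/-- ∂ψ/∂θ for ψ = ψ(F,θ). -/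
def dThM (ψ : Mat3 → ℝ → ℝ) (F : Mat3) (θ : ℝ) : ℝ :=
  deriv (fun s => ψ F s) θ

/-- Index set for the full extended state U = (ξ, v, θ) ∈ ℝ²³. -/
abbrev UIdx := Idx ⊕ (Fin 3 ⊕ Unit)

def uComp (U : FullState) : UIdx → ℝ
  | .inl B => xiComp U.1 B
  | .inr (.inl i) => U.2.1 i
  | .inr (.inr _) => U.2.2

def uUpd (U : FullState) : UIdx → ℝ → FullState
  | .inl B, s => (xiUpd U.1 B s, U.2)
  | .inr (.inl i), s => (U.1, Function.update U.2.1 i s, U.2.2)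
  | .inr (.inr _), s => (U.1, U.2.1, s)

/-- Partial derivative in the state variables (ξ,v,θ). -/
def pdU (B : UIdx) (f : FullState → ℝ) (U : FullState) : ℝ :=
  deriv (fun s => f (uUpd U B s)) (uComp U B)

/-- Second partial derivative in the state variables (ξ,v,θ). -/
def pdU2 (A B : UIdx) (f : FullState → ℝ) (U : FullState) : ℝ :=
  pdU A (fun V => pdU B f V) U

/-- Test functions for the weak formulation on T³ × [0,T):
C¹, periodic in x, compactly supported in time in [0,T). -/
def TestFun (T : ℝ) (φ : Vec3 → ℝ → ℝ) : Prop :=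
  ContDiff ℝ 1 (fun p : Vec3 × ℝ => φ p.1 p.2) ∧ PeriodicX φ ∧
  ∃ T' : ℝ, T' < T ∧ ∀ (x : Vec3) (t : ℝ), T' ≤ t → φ x t = 0

/-- The elastic stress Σ_{iα} of the augmented constitutive theory. -/
def SigmaA (ψ : Xi → ℝ → ℝ) (ξ : Xi) (θ : ℝ) (i α : Fin 3) : ℝ :=
  ∑ B : Idx, dXi B ψ ξ θ * dPhi B i α ξ.1


lemma fd_pdt {f : Vec3 → ℝ → ℝ} {x : Vec3} {t : ℝ}
    (h : DifferentiableAt ℝ (fun p : Vec3 × ℝ => f p.1 p.2) (x, t)) :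
    HasDerivAt (fun s => f x s) (pdt f x t) t := by
  have h2 : DifferentiableAt ℝ (fun s : ℝ => ((x, s) : Vec3 × ℝ)) t := by fun_prop
  exact (DifferentiableAt.comp (g := fun p : Vec3 × ℝ => f p.1 p.2) t h h2).hasDerivAt

lemma fd_pdx {f : Vec3 → ℝ → ℝ} {x : Vec3} {t : ℝ} (α : Fin 3)
    (h : DifferentiableAt ℝ (fun p : Vec3 × ℝ => f p.1 p.2) (x, t)) :
    HasDerivAt (fun s => f (Function.update x α s) t) (pdx α f x t) (x α) := by
  have h2 : DifferentiableAt ℝ (fun s : ℝ => ((Function.update x α s, t) : Vec3 × ℝ)) (x α) :=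
    ((hasDerivAt_update x α (x α)).differentiableAt).prodMk (differentiableAt_const t)
  have h' : DifferentiableAt ℝ (fun p : Vec3 × ℝ => f p.1 p.2)
      ((fun s : ℝ => ((Function.update x α s, t) : Vec3 × ℝ)) (x α)) := by
    simpa using h
  exact (DifferentiableAt.comp (g := fun p : Vec3 × ℝ => f p.1 p.2) (x α) h' h2).hasDerivAt

lemma dThM_eq {ψ : Mat3 → ℝ → ℝ} {A : Mat3} {c : ℝ}
    (h : DifferentiableAt ℝ (fun p : Mat3 × ℝ => ψ p.1 p.2) (A, c)) :
    dThM ψ A c = fderiv ℝ (fun p : Mat3 × ℝ => ψ p.1 p.2) (A, c) (0, 1) := by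
  have h2 : HasDerivAt (fun s : ℝ => ((A, s) : Mat3 × ℝ)) (0, 1) c :=
    (hasDerivAt_const c A).prodMk (hasDerivAt_id c)
  exact (HasFDerivAt.comp_hasDerivAt (l := fun p : Mat3 × ℝ => ψ p.1 p.2) c
    h.hasFDerivAt h2).deriv

lemma dFM_eq {ψ : Mat3 → ℝ → ℝ} {A : Mat3} {c : ℝ} (i α : Fin 3)
    (h : DifferentiableAt ℝ (fun p : Mat3 × ℝ => ψ p.1 p.2) (A, c)) :
    dFM i α ψ A c = fderiv ℝ (fun p : Mat3 × ℝ => ψ p.1 p.2) (A, c)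
      (Pi.single i (Pi.single α 1), 0) := by
  have h1 : HasDerivAt (fun s : ℝ => updMat A i α s) (Pi.single i (Pi.single α 1)) (A i α) := by
    rw [hasDerivAt_pi]
    intro j
    rw [hasDerivAt_pi]
    intro k
    by_cases hj : j = i
    · subst hj
      by_cases hk : k = α
      · subst hk
        simp only [updMat, Function.update_self, Pi.single_eq_same]
        exact hasDerivAt_id (A j k)
      · simpa [updMat, hk] using hasDerivAt_const (A j α) (A j k)
    · simpa [updMat, hj] using hasDerivAt_const (A i α) (A j k)
  have h2 : HasDerivAt (fun s : ℝ => ((updMat A i α s, c) : Mat3 × ℝ))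
      (Pi.single i (Pi.single α 1), 0) (A i α) :=
    h1.prodMk (hasDerivAt_const _ c)
  have h' : HasFDerivAt (fun p : Mat3 × ℝ => ψ p.1 p.2)
      (fderiv ℝ (fun p : Mat3 × ℝ => ψ p.1 p.2) (A, c))
      ((fun s : ℝ => ((updMat A i α s, c) : Mat3 × ℝ)) (A i α)) := by
    simpa [updMat] using h.hasFDerivAt
  exact (HasFDerivAt.comp_hasDerivAt (l := fun p : Mat3 × ℝ => ψ p.1 p.2)
    (f := fun s : ℝ => ((updMat A i α s, c) : Mat3 × ℝ)) (A i α) h' h2).deriv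

lemma lin_expand (L : Mat3 × ℝ →L[ℝ] ℝ) (A : Mat3) (c : ℝ) :
    L (A, c) = ∑ α, ∑ i, L (Pi.single i (Pi.single α 1), 0) * A i α + L (0, 1) * c := by
  have h : ((A, c) : Mat3 × ℝ) =
      ∑ α, ∑ i, A i α • ((Pi.single i (Pi.single α 1), 0) : Mat3 × ℝ)
        + c • ((0, 1) : Mat3 × ℝ) := by
    ext j k
    · simp only [Fin.sum_univ_three]
      fin_cases j <;> fin_cases k <;> simp
    · simp [Prod.snd_sum]
  rw [h]
  simp only [map_add, map_sum, map_smul, smul_eq_mul, mul_comm]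

/-- entropy production identity for thermoviscoelasticity.
For ψ = ψ(F,θ) C² on M³ˣ³ × (0,∞), Σ = ∂ψ/∂F, η = −∂ψ/∂θ, e = ψ + θη,
any C² thermomechanical process (F,v,θ) with θ > 0 solving the
thermoviscoelasticity system with viscous stress Z, heat flux Q and supply r
satisfies ∂_t η − ∂_α(Q_α/θ) = ∇θ·Q/θ² + (∂_α v_i) Z_{iα}/θ + r/θ. -/
theorem entropy_production_thermoviscoelasticity
    (ψ : Mat3 → ℝ → ℝ)
    (hψ : ContDiffOn ℝ 2 (fun p : Mat3 × ℝ => ψ p.1 p.2) (Set.univ ×ˢ Set.Ioi (0:ℝ)))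
    (F : Vec3 → ℝ → Mat3) (v : Vec3 → ℝ → Vec3) (θ : Vec3 → ℝ → ℝ)
    (Z : Vec3 → ℝ → Mat3) (Q : Vec3 → ℝ → Vec3) (r : Vec3 → ℝ → ℝ)
    (hFreg : FieldC 2 F) (hvreg : FieldC 2 v) (hθreg : FieldC 2 θ)
    (hZreg : FieldC 1 Z) (hQreg : FieldC 1 Q)
    (hrcont : Continuous (fun p : Vec3 × ℝ => r p.1 p.2))
    (hθpos : ∀ (x : Vec3) (t : ℝ), 0 < t → 0 < θ x t)
    -- kinematic compatibility ∂_t F_{iα} = ∂_α v_i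
    (hkin : ∀ (x : Vec3) (t : ℝ), 0 < t → ∀ i α : Fin 3,
      pdt (fun z s => F z s i α) x t = pdx α (fun z s => v z s i) x t)
    -- balance of momentum ∂_t v_i − ∂_α Σ_{iα} = ∂_α Z_{iα}
    (hmom : ∀ (x : Vec3) (t : ℝ), 0 < t → ∀ i : Fin 3,
      pdt (fun z s => v z s i) x t
          - ∑ α, pdx α (fun z s => dFM i α ψ (F z s) (θ z s)) x t
        = ∑ α, pdx α (fun z s => Z z s i α) x t)
    -- balance of energy
    (hen : ∀ (x : Vec3) (t : ℝ), 0 < t →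
      pdt (fun z s => (1/2) * (∑ i, (v z s i)^2)
            + (ψ (F z s) (θ z s) - θ z s * dThM ψ (F z s) (θ z s))) x t
          - ∑ α, pdx α (fun z s =>
              ∑ i, dFM i α ψ (F z s) (θ z s) * v z s i) x t
        = ∑ α, pdx α (fun z s => ∑ i, Z z s i α * v z s i) x t
          + ∑ α, pdx α (fun z s => Q z s α) x t + r x t) :
    ∀ (x : Vec3) (t : ℝ), 0 < t →
      pdt (fun z s => -(dThM ψ (F z s) (θ z s))) x t
          - ∑ α, pdx α (fun z s => Q z s α / θ z s) x t
        = (∑ α, pdx α θ x t * Q x t α) / (θ x t)^2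
          + (∑ α, ∑ i, pdx α (fun z s => v z s i) x t * Z x t i α) / θ x t
          + r x t / θ x t := by
  intro x t ht
  have hUo : IsOpen ((Set.univ : Set Mat3) ×ˢ Set.Ioi (0:ℝ)) := isOpen_univ.prod isOpen_Ioi
  have hPd : ∀ p ∈ ((Set.univ : Set Mat3) ×ˢ Set.Ioi (0:ℝ)),
      DifferentiableAt ℝ (fun p : Mat3 × ℝ => ψ p.1 p.2) p := fun p hp =>
    (hψ.contDiffAt (hUo.mem_nhds hp)).differentiableAt (by norm_num)
  have hx0 : (F x t, θ x t) ∈ ((Set.univ : Set Mat3) ×ˢ Set.Ioi (0:ℝ)) :=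
    ⟨trivial, hθpos x t ht⟩
  have hfd : DifferentiableAt ℝ (fderiv ℝ (fun p : Mat3 × ℝ => ψ p.1 p.2)) (F x t, θ x t) :=
    ((hψ.contDiffAt (hUo.mem_nhds hx0)).fderiv_right (m := 1) (by norm_num)).differentiableAt
      (by norm_num)
  have hFd : DifferentiableAt ℝ (fun p : Vec3 × ℝ => F p.1 p.2) (x, t) :=
    (ContDiff.differentiable hFreg (by norm_num)) _
  have hvd : DifferentiableAt ℝ (fun p : Vec3 × ℝ => v p.1 p.2) (x, t) :=
    (ContDiff.differentiable hvreg (by norm_num)) _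
  have hθd : DifferentiableAt ℝ (fun p : Vec3 × ℝ => θ p.1 p.2) (x, t) :=
    (ContDiff.differentiable hθreg (by norm_num)) _
  have hZd : DifferentiableAt ℝ (fun p : Vec3 × ℝ => Z p.1 p.2) (x, t) :=
    (ContDiff.differentiable hZreg (by norm_num)) _
  have hQd : DifferentiableAt ℝ (fun p : Vec3 × ℝ => Q p.1 p.2) (x, t) :=
    (ContDiff.differentiable hQreg (by norm_num)) _
  have hG : DifferentiableAt ℝ (fun p : Vec3 × ℝ => (F p.1 p.2, θ p.1 p.2)) (x, t) :=
    hFd.prodMk hθd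
  have hcomp : DifferentiableAt ℝ (fun p : Vec3 × ℝ =>
      fderiv ℝ (fun p : Mat3 × ℝ => ψ p.1 p.2) (F p.1 p.2, θ p.1 p.2)) (x, t) :=
    DifferentiableAt.comp (g := fderiv ℝ (fun p : Mat3 × ℝ => ψ p.1 p.2)) (x, t) hfd hG
  have hev : ∀ᶠ p : Vec3 × ℝ in 𝓝 (x, t),
      (F p.1 p.2, θ p.1 p.2) ∈ ((Set.univ : Set Mat3) ×ˢ Set.Ioi (0:ℝ)) :=
    hG.continuousAt.eventually_mem (hUo.mem_nhds hx0)
  have hηd : DifferentiableAt ℝ (fun p : Vec3 × ℝ => dThM ψ (F p.1 p.2) (θ p.1 p.2)) (x, t) := by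
    refine (hcomp.clm_apply (differentiableAt_const ((0, 1) : Mat3 × ℝ))).congr_of_eventuallyEq ?_
    filter_upwards [hev] with p hp
    exact dThM_eq (hPd _ hp)
  have hSd : ∀ i α, DifferentiableAt ℝ
      (fun p : Vec3 × ℝ => dFM i α ψ (F p.1 p.2) (θ p.1 p.2)) (x, t) := by
    intro i α
    refine (hcomp.clm_apply (differentiableAt_const
      ((Pi.single i (Pi.single α 1), 0) : Mat3 × ℝ))).congr_of_eventuallyEq ?_
    filter_upwards [hev] with p hp
    exact dFM_eq i α (hPd _ hp)
  have hvi : ∀ i, DifferentiableAt ℝ (fun p : Vec3 × ℝ => v p.1 p.2 i) (x, t) := fun i =>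
    differentiableAt_pi.1 hvd i
  have hQi : ∀ i, DifferentiableAt ℝ (fun p : Vec3 × ℝ => Q p.1 p.2 i) (x, t) := fun i =>
    differentiableAt_pi.1 hQd i
  have hFi : ∀ i α, DifferentiableAt ℝ (fun p : Vec3 × ℝ => F p.1 p.2 i α) (x, t) := fun i α =>
    differentiableAt_pi.1 (differentiableAt_pi.1 hFd i) α
  have hZi : ∀ i α, DifferentiableAt ℝ (fun p : Vec3 × ℝ => Z p.1 p.2 i α) (x, t) := fun i α =>
    differentiableAt_pi.1 (differentiableAt_pi.1 hZd i) α
  -- product rules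
  have hprod : ∀ (A : Fin 3 → Vec3 → ℝ → ℝ) (α : Fin 3),
      (∀ i, DifferentiableAt ℝ (fun p : Vec3 × ℝ => A i p.1 p.2) (x, t)) →
      pdx α (fun z s => ∑ i, A i z s * v z s i) x t
        = ∑ i, (pdx α (A i) x t * v x t i + A i x t * pdx α (fun z s => v z s i) x t) := by
    intro A α hA
    have := HasDerivAt.fun_sum (u := Finset.univ) (fun i _ =>
      (fd_pdx α (hA i)).mul (fd_pdx (f := fun z s => v z s i) α (hvi i)))
    refine this.deriv.trans ?_
    simp
  have hquot : ∀ α, pdx α (fun z s => Q z s α / θ z s) x t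
      = (pdx α (fun z s => Q z s α) x t * θ x t - Q x t α * pdx α θ x t) / (θ x t)^2 := by
    intro α
    have hne : θ (Function.update x α (x α)) t ≠ 0 := by
      simpa using (hθpos x t ht).ne'
    have := (fd_pdx (f := fun z s => Q z s α) α (hQi α)).div (fd_pdx α hθd) hne
    refine this.deriv.trans ?_
    simp
  have hψt : HasDerivAt (fun s => ψ (F x s) (θ x s))
      (∑ α, ∑ i, dFM i α ψ (F x t) (θ x t) * pdt (fun z s => F z s i α) x t
        + dThM ψ (F x t) (θ x t) * pdt θ x t) t := by
    have hF1 : HasDerivAt (fun s => F x s) (fun i α => pdt (fun z s => F z s i α) x t) t := by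
      rw [hasDerivAt_pi]
      intro i
      rw [hasDerivAt_pi]
      intro α
      exact fd_pdt (f := fun z s => F z s i α) (hFi i α)
    have := HasFDerivAt.comp_hasDerivAt (l := fun p : Mat3 × ℝ => ψ p.1 p.2) t
      (hPd _ hx0).hasFDerivAt (hF1.prodMk (fd_pdt hθd))
    rw [lin_expand, ← dThM_eq (hPd _ hx0)] at this
    simp only [← dFM_eq _ _ (hPd _ hx0)] at this
    exact this
  have hηt := fd_pdt (f := fun z s => dThM ψ (F z s) (θ z s)) hηd
  have hent : pdt (fun z s => (1/2) * (∑ i, (v z s i)^2)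
            + (ψ (F z s) (θ z s) - θ z s * dThM ψ (F z s) (θ z s))) x t
      = ∑ i, v x t i * pdt (fun z s => v z s i) x t
        + (∑ α, ∑ i, dFM i α ψ (F x t) (θ x t) * pdt (fun z s => F z s i α) x t
        - θ x t * pdt (fun z s => dThM ψ (F z s) (θ z s)) x t) := by
    have h1 := ((HasDerivAt.fun_sum (u := Finset.univ) (fun i _ =>
      (fd_pdt (f := fun z s => v z s i) (hvi i)).pow 2)).const_mul (1/2 : ℝ)).add
        (hψt.sub ((fd_pdt hθd).mul hηt))
    refine h1.deriv.trans ?_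
    simp only [Fin.sum_univ_three]
    push_cast
    ring
  have hneg : pdt (fun z s => -(dThM ψ (F z s) (θ z s))) x t
      = - pdt (fun z s => dThM ψ (F z s) (θ z s)) x t := hηt.neg.deriv
  have e1 := hen x t ht
  have e2 := hmom x t ht
  have hθ0 := (hθpos x t ht).ne'
  rw [hent] at e1
  simp only [hkin x t ht] at e1
  simp only [fun α => hprod (fun i z s => dFM i α ψ (F z s) (θ z s)) α (fun i => hSd i α),
    fun α => hprod (fun i z s => Z z s i α) α (fun i => hZi i α)] at e1
  simp only [hneg, hquot]
  have e20 := e2 0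
  have e21 := e2 1
  have e22 := e2 2
  simp only [Fin.sum_univ_three] at e1 e20 e21 e22 ⊢
  field_simp
  linear_combination θ x t * (e1 - v x t 0 * e20 - v x t 1 * e21 - v x t 2 * e22)

end
end

section
/- Entropy conservation law for the augmented adiabatic thermoelasticity system: Let ψ̂ be C² on ℝ^{19} × (0,∞) and define η̂ and ê as in the constitutive theory. Let (ξ, v, θ) : ℝ³ × ℝ⁺ → ℝ^{19} × ℝ³ × (0,∞) be a C² solution of the augmented adiabatic thermoelasticity system with heat supply r (a continuous function). Then pointwise ∂_t [ η̂(ξ(x,t), θ(x,t)) ] = r/θ. -/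
open Real MeasureTheory Filter Set Topology ENNReal NNReal

noncomputable section

lemma cof3_eq (F : Mat3) (i α : Fin 3) :
    cof3 F i α = F (i+1) (α+1) * F (i+2) (α+2) - F (i+1) (α+2) * F (i+2) (α+1) := by
  fin_cases i <;> fin_cases α <;>
    simp [cof3, Fin.sum_univ_three, eps3] <;> ring

set_option maxHeartbeats 4000000 in
lemma det3_eq (F : Mat3) :
    det3 F = F 0 0 * (F 1 1 * F 2 2 - F 1 2 * F 2 1)
      - F 0 1 * (F 1 0 * F 2 2 - F 1 2 * F 2 0)
      + F 0 2 * (F 1 0 * F 2 1 - F 1 1 * F 2 0) := by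
  simp [det3, Fin.sum_univ_three, eps3]
  ring

/-- Kronecker symbol for pairs. -/
def kd (i α j β : Fin 3) : ℝ := if j = i ∧ β = α then 1 else 0

lemma hasDerivAt_updMat (F : Mat3) (i α j β : Fin 3) :
    HasDerivAt (fun s => updMat F i α s j β) (kd i α j β) (F i α) := by
  by_cases h : j = i ∧ β = α
  · obtain ⟨rfl, rfl⟩ := h
    simpa [updMat, kd] using hasDerivAt_id' (F j β)
  · have : (fun s => updMat F i α s j β) = fun _ => F j β := by
      funext s
      by_cases hj : j = i
      · subst hj
        have hb : β ≠ α := fun hb => h ⟨rfl, hb⟩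
        simp [updMat, hb]
      · simp [updMat, hj]
    rw [this]
    simpa [kd, h] using hasDerivAt_const (F i α) (F j β)

lemma updMat_self (F : Mat3) (i α : Fin 3) : updMat F i α (F i α) = F := by
  simp [updMat]

/-- Explicit derivative of the null Lagrangians. -/
def dPhiE : Idx → Fin 3 → Fin 3 → Mat3 → ℝ
  | .inl (j, β), i, α, _ => kd i α j β
  | .inr (.inl (j, β)), i, α, F =>
      (kd i α (j+1) (β+1) * F (j+2) (β+2) + F (j+1) (β+1) * kd i α (j+2) (β+2))
      - (kd i α (j+1) (β+2) * F (j+2) (β+1) + F (j+1) (β+2) * kd i α (j+2) (β+1))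
  | .inr (.inr _), i, α, F =>
      F (i+1) (α+1) * F (i+2) (α+2) - F (i+1) (α+2) * F (i+2) (α+1)

lemma dPhi_eq (B : Idx) (i α : Fin 3) (F : Mat3) : dPhi B i α F = dPhiE B i α F := by
  have H := fun j β => hasDerivAt_updMat F i α j β
  rcases B with ⟨j, β⟩ | ⟨j, β⟩ | u
  · exact (H j β).deriv
  · unfold dPhi
    simp only [xiComp, Phi3, cof3_eq]
    have := (((H (j+1) (β+1)).mul (H (j+2) (β+2))).sub
      ((H (j+1) (β+2)).mul (H (j+2) (β+1)))).deriv
    simp only [updMat_self] at this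
    exact this
  · unfold dPhi
    simp only [xiComp, Phi3, det3_eq]
    have := ((((H 0 0).mul (((H 1 1).mul (H 2 2)).sub ((H 1 2).mul (H 2 1)))).sub
      ((H 0 1).mul (((H 1 0).mul (H 2 2)).sub ((H 1 2).mul (H 2 0))))).add
      ((H 0 2).mul (((H 1 0).mul (H 2 1)).sub ((H 1 1).mul (H 2 0))))).deriv
    simp only [updMat_self] at this
    refine this.trans ?_
    simp only [dPhiE, updMat_self]
    fin_cases i <;> fin_cases α <;> simp [kd, updMat_self] <;> ring

/-- Directional derivative of dPhiE at F in direction G. -/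
def ddPhiE : Idx → Fin 3 → Fin 3 → Mat3 → Mat3 → ℝ
  | .inl _, _, _, _, _ => 0
  | .inr (.inl (j, β)), i, α, _, G =>
      (kd i α (j+1) (β+1) * G (j+2) (β+2) + G (j+1) (β+1) * kd i α (j+2) (β+2))
      - (kd i α (j+1) (β+2) * G (j+2) (β+1) + G (j+1) (β+2) * kd i α (j+2) (β+1))
  | .inr (.inr _), i, α, F, G =>
      (G (i+1) (α+1) * F (i+2) (α+2) + F (i+1) (α+1) * G (i+2) (α+2))
      - (G (i+1) (α+2) * F (i+2) (α+1) + F (i+1) (α+2) * G (i+2) (α+1))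

lemma hasDerivAt_dPhi (B : Idx) (i α : Fin 3) (F : ℝ → Mat3) (G : Mat3) (s : ℝ)
    (h : ∀ k γ, HasDerivAt (fun s => F s k γ) (G k γ) s) :
    HasDerivAt (fun s => dPhi B i α (F s)) (ddPhiE B i α (F s) G) s := by
  simp only [dPhi_eq]
  rcases B with ⟨j, β⟩ | ⟨j, β⟩ | u
  · exact hasDerivAt_const _ _
  · exact (((h _ _).const_mul _).add ((h _ _).mul_const _)).sub
      (((h _ _).const_mul _).add ((h _ _).mul_const _))
  · exact ((h _ _).mul (h _ _)).sub ((h _ _).mul (h _ _))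

lemma piola (B : Idx) (i : Fin 3) (F : Mat3) (G : Fin 3 → Mat3)
    (hG : ∀ i α β, G α i β = G β i α) : ∑ α, ddPhiE B i α F (G α) = 0 := by
  have h1 := fun i => hG i 0 1
  have h2 := fun i => hG i 0 2
  have h3 := fun i => hG i 1 2
  rcases B with ⟨j, β⟩ | ⟨j, β⟩ | u
  · simp [ddPhiE]
  · fin_cases i <;> fin_cases j <;> fin_cases β <;>
      simp [ddPhiE, kd, Fin.sum_univ_three, h1, h2, h3]
  · fin_cases i <;>
      simp [ddPhiE, Fin.sum_univ_three, h1, h2, h3] <;> ring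

/-- Basis vectors of the extended state space. -/
def eB (B : Idx) : Xi := xiUpd 0 B 1

lemma updMat_eq (F : Mat3) (i α : Fin 3) (s : ℝ) :
    updMat F i α s = F + (s - F i α) • updMat 0 i α 1 := by
  funext j β
  by_cases hj : j = i
  · subst hj
    by_cases hb : β = α
    · subst hb; simp [updMat]
    · simp [updMat, hb]
  · simp [updMat, hj]

lemma xiUpd_eq (ξ : Xi) (B : Idx) (s : ℝ) :
    xiUpd ξ B s = ξ + (s - xiComp ξ B) • eB B := by
  rcases B with ⟨j, β⟩ | ⟨j, β⟩ | u
  · simp [xiUpd, eB, xiComp, Prod.ext_iff, ← updMat_eq]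
  · simp [xiUpd, eB, xiComp, Prod.ext_iff, ← updMat_eq]
  · simp [xiUpd, eB, xiComp, Prod.ext_iff]

lemma mat_sum (F : Mat3) : F = ∑ p : Fin 3 × Fin 3, F p.1 p.2 • updMat 0 p.1 p.2 1 := by
  funext j β
  simp only [Finset.sum_apply, Pi.smul_apply, smul_eq_mul]
  rw [Finset.sum_eq_single (j, β)]
  · simp [updMat]
  · rintro ⟨k, γ⟩ - h
    by_cases hj : j = k
    · subst hj
      have hb : β ≠ γ := fun hb => h (by rw [hb])
      simp [updMat, hb]
    · simp [updMat, hj]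
  · simp

lemma xi_sum (ξ : Xi) : ξ = ∑ B : Idx, xiComp ξ B • eB B := by
  obtain ⟨F, Z, w⟩ := ξ
  rw [Fintype.sum_sum_type, Fintype.sum_sum_type]
  simp only [Prod.ext_iff, Prod.fst_add, Prod.snd_add, Prod.fst_sum, Prod.snd_sum, xiComp, eB,
    xiUpd, Prod.smul_fst, Prod.smul_snd, Prod.fst_zero, Prod.snd_zero, smul_zero,
    Finset.sum_const_zero, add_zero, zero_add]
  refine ⟨mat_sum F, mat_sum Z, ?_⟩
  simp

/-- ψ uncurried. -/
def unc (ψ : Xi → ℝ → ℝ) : Xi × ℝ → ℝ := fun p => ψ p.1 p.2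

lemma unc_contDiffAt {ψ : Xi → ℝ → ℝ}
    (hψ : ContDiffOn ℝ 2 (fun p : Xi × ℝ => ψ p.1 p.2) (Set.univ ×ˢ Set.Ioi (0:ℝ)))
    (ξ : Xi) {θ : ℝ} (h : 0 < θ) : ContDiffAt ℝ 2 (unc ψ) (ξ, θ) :=
  hψ.contDiffAt ((isOpen_univ.prod isOpen_Ioi).mem_nhds ⟨trivial, h⟩)

lemma dTh_eq {ψ : Xi → ℝ → ℝ}
    (hψ : ContDiffOn ℝ 2 (fun p : Xi × ℝ => ψ p.1 p.2) (Set.univ ×ˢ Set.Ioi (0:ℝ)))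
    (ξ : Xi) {θ : ℝ} (h : 0 < θ) : dTh ψ ξ θ = fderiv ℝ (unc ψ) (ξ, θ) (0, 1) := by
  have h1 := ((unc_contDiffAt hψ ξ h).differentiableAt (by norm_num)).hasFDerivAt
  have h2 : HasDerivAt (fun s : ℝ => ((ξ, s) : Xi × ℝ)) (0, 1) θ :=
    (hasDerivAt_const θ ξ).prodMk (hasDerivAt_id θ)
  exact (h1.comp_hasDerivAt θ h2).deriv

lemma dXi_eq {ψ : Xi → ℝ → ℝ}
    (hψ : ContDiffOn ℝ 2 (fun p : Xi × ℝ => ψ p.1 p.2) (Set.univ ×ˢ Set.Ioi (0:ℝ)))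
    (B : Idx) (ξ : Xi) {θ : ℝ} (h : 0 < θ) :
    dXi B ψ ξ θ = fderiv ℝ (unc ψ) (ξ, θ) (eB B, 0) := by
  have h1 := ((unc_contDiffAt hψ ξ h).differentiableAt (by norm_num)).hasFDerivAt
  have h2 : HasDerivAt (fun s : ℝ => ((xiUpd ξ B s, θ) : Xi × ℝ)) (eB B, 0) (xiComp ξ B) := by
    have h0 : HasDerivAt (fun s : ℝ => xiUpd ξ B s) (eB B) (xiComp ξ B) := by
      rw [show (fun s : ℝ => xiUpd ξ B s) = fun s => ξ + (s - xiComp ξ B) • eB B from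
        funext fun s => xiUpd_eq ξ B s]
      simpa using
        (((hasDerivAt_id' (xiComp ξ B)).sub_const (xiComp ξ B)).smul_const (eB B)).const_add ξ
    exact h0.prodMk (hasDerivAt_const _ θ)
  have e : xiUpd ξ B (xiComp ξ B) = ξ := by simp [xiUpd_eq]
  have h3 : HasFDerivAt (unc ψ) (fderiv ℝ (unc ψ) (ξ, θ)) (xiUpd ξ B (xiComp ξ B), θ) := by
    rw [e]; exact h1
  exact (h3.comp_hasDerivAt (xiComp ξ B) h2).deriv

lemma diff_line {f : Vec3 × ℝ → ℝ} {x : Vec3} {t : ℝ}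
    (h : DifferentiableAt ℝ f (x, t)) (α : Fin 3) :
    DifferentiableAt ℝ (fun s => f (Function.update x α s, t)) (x α) := by
  have h2 : DifferentiableAt ℝ (fun s : ℝ => ((Function.update x α s, t) : Vec3 × ℝ)) (x α) :=
    (hasDerivAt_update x α (x α)).differentiableAt.prodMk (differentiableAt_const t)
  have h3 : DifferentiableAt ℝ f (Function.update x α (x α), t) := by simpa using h
  exact h3.comp (x α) h2

lemma diff_time {E : Type*} [NormedAddCommGroup E] [NormedSpace ℝ E]
    {f : Vec3 × ℝ → E} {x : Vec3} {t : ℝ}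
    (h : DifferentiableAt ℝ f (x, t)) : DifferentiableAt ℝ (fun s => f (x, s)) t :=
  DifferentiableAt.comp t h ((differentiableAt_const x).prodMk differentiableAt_id)

lemma xiComp_hasDerivAt {ξ : ℝ → Xi} {ξ' : Xi} {t : ℝ} (h : HasDerivAt ξ ξ' t) (B : Idx) :
    HasDerivAt (fun s => xiComp (ξ s) B) (xiComp ξ' B) t := by
  have h1 : HasDerivAt (fun s => (ξ s).1) ξ'.1 t :=
    (ContinuousLinearMap.fst ℝ Mat3 (Mat3 × ℝ)).hasFDerivAt.comp_hasDerivAt t h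
  have h2 : HasDerivAt (fun s => (ξ s).2) ξ'.2 t :=
    (ContinuousLinearMap.snd ℝ Mat3 (Mat3 × ℝ)).hasFDerivAt.comp_hasDerivAt t h
  have h3 : HasDerivAt (fun s => (ξ s).2.1) ξ'.2.1 t :=
    (ContinuousLinearMap.fst ℝ Mat3 ℝ).hasFDerivAt.comp_hasDerivAt t h2
  have h4 : HasDerivAt (fun s => (ξ s).2.2) ξ'.2.2 t :=
    (ContinuousLinearMap.snd ℝ Mat3 ℝ).hasFDerivAt.comp_hasDerivAt t h2
  rcases B with ⟨j, β⟩ | ⟨j, β⟩ | u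
  · exact hasDerivAt_pi.1 (hasDerivAt_pi.1 h1 j) β
  · exact hasDerivAt_pi.1 (hasDerivAt_pi.1 h3 j) β
  · exact h4

/-- entropy conservation law for the augmented adiabatic
thermoelasticity system: any C² solution (ξ,v,θ) with θ > 0 of the augmented
system with heat supply r satisfies ∂_t η̂(ξ,θ) = r/θ pointwise. -/
theorem entropy_conservation_augmented_adiabatic
    (ψ : Xi → ℝ → ℝ)
    (hψ : ContDiffOn ℝ 2 (fun p : Xi × ℝ => ψ p.1 p.2) (Set.univ ×ˢ Set.Ioi (0:ℝ)))
    (ξf : Vec3 → ℝ → Xi) (vf : Vec3 → ℝ → Vec3) (θf : Vec3 → ℝ → ℝ)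
    (r : Vec3 → ℝ → ℝ)
    (hξreg : FieldC 2 ξf) (hvreg : FieldC 2 vf) (hθreg : FieldC 2 θf)
    (hrcont : Continuous (fun p : Vec3 × ℝ => r p.1 p.2))
    (hθpos : ∀ (x : Vec3) (t : ℝ), 0 < t → 0 < θf x t)
    (hsys : ∀ (x : Vec3) (t : ℝ), 0 < t →
      AugSys ψ ξf vf θf (fun _ _ => 0) (fun _ _ => 0) r x t) :
    ∀ (x : Vec3) (t : ℝ), 0 < t →
      pdt (fun z s => etaHat ψ (ξf z s) (θf z s)) x t = r x t / θf x t := by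
  intro x t ht
  obtain ⟨hs1, hs2, hs3, hs4⟩ := hsys x t ht
  have hθ := hθpos x t ht
  have dξ : DifferentiableAt ℝ (fun p : Vec3 × ℝ => ξf p.1 p.2) (x, t) :=
    hξreg.differentiable (by norm_num) _
  have dv : DifferentiableAt ℝ (fun p : Vec3 × ℝ => vf p.1 p.2) (x, t) :=
    hvreg.differentiable (by norm_num) _
  have dθ : DifferentiableAt ℝ (fun p : Vec3 × ℝ => θf p.1 p.2) (x, t) :=
    hθreg.differentiable (by norm_num) _
  have dvi : ∀ i, DifferentiableAt ℝ (fun p : Vec3 × ℝ => vf p.1 p.2 i) (x, t) :=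
    fun i => differentiableAt_pi.1 dv i
  have dF : ∀ k γ, DifferentiableAt ℝ (fun p : Vec3 × ℝ => (ξf p.1 p.2).1 k γ) (x, t) :=
    fun k γ => differentiableAt_pi.1 (differentiableAt_pi.1 dξ.fst k) γ
  have hev : ∀ᶠ p : Vec3 × ℝ in 𝓝 (x, t), 0 < p.2 :=
    continuous_snd.continuousAt.eventually (lt_mem_nhds ht)
  have dfd : DifferentiableAt ℝ (fun p : Vec3 × ℝ =>
      fderiv ℝ (unc ψ) (ξf p.1 p.2, θf p.1 p.2)) (x, t) := by
    have h1 : DifferentiableAt ℝ (fderiv ℝ (unc ψ)) (ξf x t, θf x t) :=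
      ((unc_contDiffAt hψ (ξf x t) hθ).fderiv_right (m := 1) (by norm_num)).differentiableAt
        (by norm_num)
    exact DifferentiableAt.comp (x, t) (g := fderiv ℝ (unc ψ)) h1 (dξ.prodMk dθ)
  have dX : ∀ B, DifferentiableAt ℝ
      (fun p : Vec3 × ℝ => dXi B ψ (ξf p.1 p.2) (θf p.1 p.2)) (x, t) := fun B =>
    (dfd.clm_apply (differentiableAt_const (eB B, (0:ℝ)))).congr_of_eventuallyEq
      (hev.mono fun p hp => dXi_eq hψ B _ (hθpos p.1 p.2 hp))
  have dT : DifferentiableAt ℝ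
      (fun p : Vec3 × ℝ => dTh ψ (ξf p.1 p.2) (θf p.1 p.2)) (x, t) :=
    (dfd.clm_apply (differentiableAt_const ((0:Xi), (1:ℝ)))).congr_of_eventuallyEq
      (hev.mono fun p hp => dTh_eq hψ _ (hθpos p.1 p.2 hp))
  -- time derivatives
  have tξ := (diff_time dξ).hasDerivAt
  have tθ := (diff_time dθ).hasDerivAt
  have tT := (diff_time dT).hasDerivAt
  have tv := fun i => (diff_time (dvi i)).hasDerivAt
  simp only at tξ tθ tT tv
  set ξ' := deriv (fun s => ξf x s) t with hξ'
  set θ' := deriv (fun s => θf x s) t with hθ'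
  set T' := deriv (fun s => dTh ψ (ξf x s) (θf x s)) t with hT'
  have tψ : HasDerivAt (fun s => ψ (ξf x s) (θf x s))
      ((∑ B : Idx, dXi B ψ (ξf x t) (θf x t) * xiComp ξ' B) + dTh ψ (ξf x t) (θf x t) * θ') t := by
    have h1 := ((unc_contDiffAt hψ (ξf x t) hθ).differentiableAt (by norm_num)).hasFDerivAt
    have h2 := h1.comp_hasDerivAt t (tξ.prodMk tθ)
    refine h2.congr_deriv ?_
    have e : (ξ', θ') = (∑ B : Idx, xiComp ξ' B • ((eB B, 0) : Xi × ℝ))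
        + θ' • ((0, 1) : Xi × ℝ) := by
      rw [Prod.ext_iff]
      constructor
      · simp only [Prod.fst_add, Prod.fst_sum, Prod.smul_fst, smul_zero, add_zero]
        exact xi_sum ξ'
      · simp [Prod.snd_sum]
    rw [e, map_add, map_sum, dTh_eq hψ _ hθ]
    simp only [map_smul, smul_eq_mul, dXi_eq hψ _ _ hθ]
    congr 1
    · exact Finset.sum_congr rfl fun B _ => mul_comm _ _
    · exact mul_comm _ _
  -- energy
  have tE : pdt (fun y s => (1/2) * (∑ i, (vf y s i)^2) + eHat ψ (ξf y s) (θf y s)) x t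
      = (∑ i, vf x t i * pdt (fun y s => vf y s i) x t)
        + (∑ B : Idx, dXi B ψ (ξf x t) (θf x t) * xiComp ξ' B) - θf x t * T' := by
    have h := (((HasDerivAt.fun_sum (u := Finset.univ) fun i _ => (tv i).pow 2).const_mul (1/2:ℝ)).add
      (tψ.sub (tθ.mul tT)))
    refine h.deriv.trans ?_
    simp only [pdt, Fin.sum_univ_three]
    push_cast
    ring
  have tη : pdt (fun z s => etaHat ψ (ξf z s) (θf z s)) x t = -T' := tT.neg.deriv
  -- space derivatives
  have xv : ∀ α i, HasDerivAt (fun s => vf (Function.update x α s) t i)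
      (pdx α (fun y s => vf y s i) x t) (x α) := fun α i => (diff_line (dvi i) α).hasDerivAt
  have xF : ∀ α k γ, HasDerivAt (fun s => (ξf (Function.update x α s) t).1 k γ)
      (pdx α (fun y s => (ξf y s).1 k γ) x t) (x α) :=
    fun α k γ => (diff_line (dF k γ) α).hasDerivAt
  set G : Fin 3 → Mat3 := fun α k γ => pdx α (fun y s => (ξf y s).1 k γ) x t with hG
  have xD : ∀ B i α, HasDerivAt (fun s => dPhi B i α (ξf (Function.update x α s) t).1)
      (ddPhiE B i α (ξf x t).1 (G α)) (x α) := fun B i α => by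
    have := hasDerivAt_dPhi B i α (fun s => (ξf (Function.update x α s) t).1) (G α) (x α)
      (fun k γ => xF α k γ)
    simpa using this
  have xS : ∀ i α, HasDerivAt (fun s => ∑ B : Idx,
      dXi B ψ (ξf (Function.update x α s) t) (θf (Function.update x α s) t) *
        dPhi B i α (ξf (Function.update x α s) t).1)
      (pdx α (fun y s => ∑ B : Idx, dXi B ψ (ξf y s) (θf y s) * dPhi B i α (ξf y s).1) x t)
      (x α) := fun i α =>
    (DifferentiableAt.fun_sum fun B _ =>
      (diff_line (dX B) α).mul (xD B i α).differentiableAt).hasDerivAt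
  have e1 : ∀ B, xiComp ξ' B = ∑ α, ∑ i, (ddPhiE B i α (ξf x t).1 (G α) * vf x t i
      + dPhi B i α (ξf x t).1 * pdx α (fun y s => vf y s i) x t) := fun B => by
    have h := hs1 B
    rw [show pdt (fun y s => xiComp (ξf y s) B) x t = xiComp ξ' B from
      (xiComp_hasDerivAt tξ B).deriv] at h
    rw [h]
    refine Finset.sum_congr rfl fun α _ => ?_
    have := (HasDerivAt.fun_sum (u := Finset.univ) fun i _ => (xD B i α).mul (xv α i)).deriv
    simp only [Function.update_eq_self] at this
    exact this
  have e1' : ∀ B, xiComp ξ' B = ∑ α, ∑ i,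
      dPhi B i α (ξf x t).1 * pdx α (fun y s => vf y s i) x t := fun B => by
    rw [e1 B]
    simp only [Finset.sum_add_distrib]
    rw [Finset.sum_comm]
    simp only [← Finset.sum_mul, piola B _ _ G hs4, zero_mul, Finset.sum_const_zero, zero_add]
  have e3 : ∀ α, pdx α (fun y s => ∑ i,
      (∑ B : Idx, dXi B ψ (ξf y s) (θf y s) * dPhi B i α (ξf y s).1) * vf y s i) x t
      = ∑ i, (pdx α (fun y s => ∑ B : Idx, dXi B ψ (ξf y s) (θf y s) * dPhi B i α (ξf y s).1) x t
          * vf x t i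
        + (∑ B : Idx, dXi B ψ (ξf x t) (θf x t) * dPhi B i α (ξf x t).1)
          * pdx α (fun y s => vf y s i) x t) := fun α => by
    have := (HasDerivAt.fun_sum (u := Finset.univ) fun i _ => (xS i α).mul (xv α i)).deriv
    simp only [Function.update_eq_self] at this
    exact this
  have z : ∀ α, pdx α (fun _ _ => (0:ℝ)) x t = 0 := fun α => by simp [pdx]
  rw [tE] at hs3
  simp only [Pi.zero_apply, zero_mul, Finset.sum_const_zero, z, add_zero] at hs2 hs3
  simp only [e3, hs2, e1', Finset.sum_add_distrib] at hs3
  have k1 : ∑ i, vf x t i * ∑ α, pdx α (fun y s =>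
        ∑ B : Idx, dXi B ψ (ξf y s) (θf y s) * dPhi B i α (ξf y s).1) x t
      = ∑ α, ∑ i, pdx α (fun y s =>
        ∑ B : Idx, dXi B ψ (ξf y s) (θf y s) * dPhi B i α (ξf y s).1) x t * vf x t i := by
    rw [Finset.sum_comm]
    refine Finset.sum_congr rfl fun i _ => ?_
    rw [Finset.mul_sum]
    exact Finset.sum_congr rfl fun α _ => mul_comm _ _
  have k2 : ∑ B : Idx, dXi B ψ (ξf x t) (θf x t) * ∑ α, ∑ i,
        dPhi B i α (ξf x t).1 * pdx α (fun y s => vf y s i) x t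
      = ∑ α, ∑ i, (∑ B : Idx, dXi B ψ (ξf x t) (θf x t) * dPhi B i α (ξf x t).1)
          * pdx α (fun y s => vf y s i) x t := by
    simp only [Finset.mul_sum, Finset.sum_mul]
    rw [Finset.sum_comm]
    refine Finset.sum_congr rfl fun α _ => ?_
    rw [Finset.sum_comm]
    exact Finset.sum_congr rfl fun i _ => Finset.sum_congr rfl fun B _ => (mul_assoc _ _ _).symm
  rw [k1, k2] at hs3
  rw [tη, eq_div_iff hθ.ne']
  linarith

end
end

section
/- Appendix Lemma (bound on the relative strain–velocity product): Assume ψ̂ ∈ C³(ℝ^{19} × (0,∞)) satisfies the growth conditions (with p ≥ 4), and let M, δ > 0. Then there exist R = R(M,δ) and a constant C > 0 such that for every (ξ,v,θ) ∈ ℝ^{19} × ℝ³ × (0,∞) with ξ = (F,ζ,w), every (ξ̄,v̄,θ̄) ∈ Γ_{M,δ}, and every α ∈ {1,2,3}: | Σ_{B,i} ((∂Φ^B/∂F_{iα})(F) − (∂Φ^B/∂F_{iα})(F̄)) (v_i − v̄_i) | ≤ C(|ξ|_{p,q,r} + θ^ℓ + ½|v − v̄|²) whenever |ξ|_{p,q,r}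 + θ^ℓ + |v|² > R, and ≤ C(|F − F̄|² + |ζ − ζ̄|² + |w − w̄|² + |θ − θ̄|² + |v − v̄|²) whenever |ξ|_{p,q,r} + θ^ℓ + |v|² ≤ R. -/
open Real MeasureTheory Filter Set Topology ENNReal NNReal

noncomputable section

-- HELPERS
lemma abs_eps3_le (i j k : Fin 3) : |eps3 i j k| ≤ 1 := by
  unfold eps3; split_ifs <;> norm_num

/-- Derivative of an entry of the updated matrix. -/
def kron (i α j β : Fin 3) : ℝ := if j = i ∧ β = α then 1 else 0

lemma abs_kron_le (i α j β : Fin 3) : |kron i α j β| ≤ 1 := by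
  unfold kron; split_ifs <;> norm_num

lemma hasDeriv_updMat (F : Mat3) (i α j β : Fin 3) (s : ℝ) :
    HasDerivAt (fun s => updMat F i α s j β) (kron i α j β) s := by
  unfold updMat kron
  by_cases hj : j = i
  · subst hj
    by_cases hb : β = α
    · subst hb
      simpa using hasDerivAt_id' s
    · simpa [hb] using hasDerivAt_const s (F j β)
  · simpa [hj] using hasDerivAt_const s (F j β)

lemma dPhi_inl (j β i α : Fin 3) (F : Mat3) :
    dPhi (.inl (j, β)) i α F = kron i α j β :=
  (hasDeriv_updMat F i α j β _).deriv

lemma dPhi_cof (a b i α : Fin 3) (F : Mat3) :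
    dPhi (.inr (.inl (a, b))) i α F =
      (1/2) * ∑ j, ∑ k, ∑ β, ∑ γ, eps3 a j k * eps3 b β γ *
        (kron i α j β * F k γ + F j β * kron i α k γ) := by
  have h : HasDerivAt (fun s => cof3 (updMat F i α s) a b)
      ((1/2) * ∑ j, ∑ k, ∑ β, ∑ γ, eps3 a j k * eps3 b β γ *
        (kron i α j β * F k γ + F j β * kron i α k γ)) (F i α) := by
    unfold cof3
    refine HasDerivAt.const_mul _ ?_
    refine HasDerivAt.fun_sum fun j _ => ?_
    refine HasDerivAt.fun_sum fun k _ => ?_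
    refine HasDerivAt.fun_sum fun β _ => ?_
    refine HasDerivAt.fun_sum fun γ _ => ?_
    have h1 := hasDeriv_updMat F i α j β (F i α)
    have h2 := hasDeriv_updMat F i α k γ (F i α)
    refine ((h1.const_mul (eps3 a j k * eps3 b β γ)).fun_mul h2).congr_deriv ?_
    rw [updMat_self]; ring
  exact h.deriv

lemma dPhi_det (u : Unit) (i α : Fin 3) (F : Mat3) :
    dPhi (.inr (.inr u)) i α F =
      (1/6) * ∑ a, ∑ j, ∑ k, ∑ b, ∑ β, ∑ γ, eps3 a j k * eps3 b β γ *
        (kron i α a b * (F j β * F k γ) + kron i α j β * (F a b * F k γ)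
          + kron i α k γ * (F a b * F j β)) := by
  have h : HasDerivAt (fun s => det3 (updMat F i α s))
      ((1/6) * ∑ a, ∑ j, ∑ k, ∑ b, ∑ β, ∑ γ, eps3 a j k * eps3 b β γ *
        (kron i α a b * (F j β * F k γ) + kron i α j β * (F a b * F k γ)
          + kron i α k γ * (F a b * F j β))) (F i α) := by
    unfold det3
    refine HasDerivAt.const_mul _ ?_
    refine HasDerivAt.fun_sum fun a _ => ?_
    refine HasDerivAt.fun_sum fun j _ => ?_
    refine HasDerivAt.fun_sum fun k _ => ?_
    refine HasDerivAt.fun_sum fun b _ => ?_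
    refine HasDerivAt.fun_sum fun β _ => ?_
    refine HasDerivAt.fun_sum fun γ _ => ?_
    have h0 := hasDeriv_updMat F i α a b (F i α)
    have h1 := hasDeriv_updMat F i α j β (F i α)
    have h2 := hasDeriv_updMat F i α k γ (F i α)
    refine (((h0.const_mul (eps3 a j k * eps3 b β γ)).fun_mul h1).fun_mul h2).congr_deriv ?_
    simp only [updMat_self]; ring
  exact h.deriv

lemma abs_sum3_le (f : Fin 3 → ℝ) (K : ℝ) (h : ∀ i, |f i| ≤ K) : |∑ i, f i| ≤ 3 * K := by
  refine (Finset.abs_sum_le_sum_abs _ _).trans ?_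
  refine (Finset.sum_le_sum fun i _ => h i).trans ?_
  simp

lemma mul_le_of_abs_le_one {x y K : ℝ} (hx : |x| ≤ 1) (hy : |y| ≤ K) : |x * y| ≤ K := by
  rw [abs_mul]
  nlinarith [abs_nonneg x, abs_nonneg y]

lemma abs_mul_sub_mul {x y x' y' a b d : ℝ} (hx : |x| ≤ a) (hy' : |y'| ≤ b)
    (hdx : |x - x'| ≤ d) (hdy : |y - y'| ≤ d) :
    |x * y - x' * y'| ≤ (a + b) * d := by
  have e : x * y - x' * y' = x * (y - y') + (x - x') * y' := by ring
  rw [e]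
  refine (abs_add_le _ _).trans ?_
  rw [abs_mul, abs_mul]
  have h1 : |x| * |y - y'| ≤ a * d :=
    mul_le_mul hx hdy (abs_nonneg _) ((abs_nonneg _).trans hx)
  have h2 : |x - x'| * |y'| ≤ d * b :=
    mul_le_mul hdx hy' (abs_nonneg _) ((abs_nonneg _).trans hdx)
  linarith

lemma dPhi_diff (F G : Mat3) (a b d : ℝ) (hF : ∀ i j, |F i j| ≤ a) (hG : ∀ i j, |G i j| ≤ b)
    (hd : ∀ i j, |F i j - G i j| ≤ d) (B : Idx) (i α : Fin 3) :
    |dPhi B i α F - dPhi B i α G| ≤ 365 * (1 + a + b) * d := by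
  have ha : 0 ≤ a := (abs_nonneg _).trans (hF 0 0)
  have hb : 0 ≤ b := (abs_nonneg _).trans (hG 0 0)
  have hd0 : 0 ≤ d := (abs_nonneg _).trans (hd 0 0)
  have had : 0 ≤ a * d := mul_nonneg ha hd0
  have hbd : 0 ≤ b * d := mul_nonneg hb hd0
  rcases B with ⟨j, β⟩ | ⟨j0, β0⟩ | u
  · rw [dPhi_inl, dPhi_inl, sub_self, abs_zero]; positivity
  · rw [dPhi_cof, dPhi_cof, ← mul_sub]
    simp only [← Finset.sum_sub_distrib]
    rw [abs_mul]
    have : |∑ j, ∑ k, ∑ β, ∑ γ, (eps3 j0 j k * eps3 β0 β γ *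
        (kron i α j β * F k γ + F j β * kron i α k γ) - eps3 j0 j k * eps3 β0 β γ *
        (kron i α j β * G k γ + G j β * kron i α k γ))| ≤ 3 * (3 * (3 * (3 * (2 * d)))) := by
      refine abs_sum3_le _ _ fun j => abs_sum3_le _ _ fun k => abs_sum3_le _ _ fun β =>
        abs_sum3_le _ _ fun γ => ?_
      rw [← mul_sub, mul_assoc]
      refine mul_le_of_abs_le_one (abs_eps3_le _ _ _)
        (mul_le_of_abs_le_one (abs_eps3_le _ _ _) ?_)
      have e : (kron i α j β * F k γ + F j β * kron i α k γ) -
          (kron i α j β * G k γ + G j β * kron i α k γ) =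
          kron i α j β * (F k γ - G k γ) + kron i α k γ * (F j β - G j β) := by ring
      rw [e]
      refine (abs_add_le _ _).trans ?_
      have h1 := mul_le_of_abs_le_one (abs_kron_le i α j β) (hd k γ)
      have h2 := mul_le_of_abs_le_one (abs_kron_le i α k γ) (hd j β)
      linarith
    rw [abs_of_nonneg (by norm_num : (0:ℝ) ≤ 1/2)]
    nlinarith
  · rw [dPhi_det, dPhi_det, ← mul_sub]
    simp only [← Finset.sum_sub_distrib]
    rw [abs_mul]
    have : |∑ p, ∑ j, ∑ k, ∑ q, ∑ β, ∑ γ, (eps3 p j k * eps3 q β γ *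
        (kron i α p q * (F j β * F k γ) + kron i α j β * (F p q * F k γ)
          + kron i α k γ * (F p q * F j β)) - eps3 p j k * eps3 q β γ *
        (kron i α p q * (G j β * G k γ) + kron i α j β * (G p q * G k γ)
          + kron i α k γ * (G p q * G j β)))| ≤
        3 * (3 * (3 * (3 * (3 * (3 * (3 * ((a + b) * d))))))) := by
      refine abs_sum3_le _ _ fun p => abs_sum3_le _ _ fun j => abs_sum3_le _ _ fun k =>
        abs_sum3_le _ _ fun q => abs_sum3_le _ _ fun β => abs_sum3_le _ _ fun γ => ?_
      rw [← mul_sub, mul_assoc]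
      refine mul_le_of_abs_le_one (abs_eps3_le _ _ _)
        (mul_le_of_abs_le_one (abs_eps3_le _ _ _) ?_)
      have e : (kron i α p q * (F j β * F k γ) + kron i α j β * (F p q * F k γ)
          + kron i α k γ * (F p q * F j β)) -
          (kron i α p q * (G j β * G k γ) + kron i α j β * (G p q * G k γ)
          + kron i α k γ * (G p q * G j β)) =
          kron i α p q * (F j β * F k γ - G j β * G k γ)
          + kron i α j β * (F p q * F k γ - G p q * G k γ)
          + kron i α k γ * (F p q * F j β - G p q * G j β) := by ring
      rw [e]
      refine (abs_add_le _ _).trans ?_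
      have h0 := (abs_add_le (kron i α p q * (F j β * F k γ - G j β * G k γ))
        (kron i α j β * (F p q * F k γ - G p q * G k γ)))
      have h1 := mul_le_of_abs_le_one (abs_kron_le i α p q)
        (abs_mul_sub_mul (hF j β) (hG k γ) (hd j β) (hd k γ))
      have h2 := mul_le_of_abs_le_one (abs_kron_le i α j β)
        (abs_mul_sub_mul (hF p q) (hG k γ) (hd p q) (hd k γ))
      have h3 := mul_le_of_abs_le_one (abs_kron_le i α k γ)
        (abs_mul_sub_mul (hF p q) (hG j β) (hd p q) (hd j β))
      linarith
    rw [abs_of_nonneg (by norm_num : (0:ℝ) ≤ 1/6)]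
    nlinarith

lemma sum_bound (F G : Mat3) (a b d V : ℝ) (hF : ∀ i j, |F i j| ≤ a) (hG : ∀ i j, |G i j| ≤ b)
    (hd : ∀ i j, |F i j - G i j| ≤ d) (v v' : Vec3) (hV : ∀ i, |v i - v' i| ≤ V) (α : Fin 3) :
    |∑ B : Idx, ∑ i, (dPhi B i α F - dPhi B i α G) * (v i - v' i)|
      ≤ 20805 * ((1 + a + b) * d * V) := by
  have h : ∀ B : Idx, |∑ i, (dPhi B i α F - dPhi B i α G) * (v i - v' i)|
      ≤ 3 * (365 * (1 + a + b) * d * V) := by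
    intro B
    refine abs_sum3_le _ _ fun i => ?_
    rw [abs_mul]
    have h1 := dPhi_diff F G a b d hF hG hd B i α
    exact mul_le_mul h1 (hV i) (abs_nonneg _) ((abs_nonneg _).trans h1)
  refine (Finset.abs_sum_le_sum_abs _ _).trans ?_
  refine (Finset.sum_le_sum fun B _ => h B).trans ?_
  rw [Finset.sum_const, nsmul_eq_mul]
  have hc : (Finset.univ : Finset Idx).card = 19 := by
    simp [Fintype.card_sum, Fintype.card_prod]
  rw [hc]
  apply le_of_eq; push_cast; ring

lemma entry_le_mnorm (F : Mat3) (i j : Fin 3) : |F i j| ≤ mnorm F := by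
  unfold mnorm
  apply Real.abs_le_sqrt
  have h1 : (F i j)^2 ≤ ∑ j, (F i j)^2 :=
    Finset.single_le_sum (f := fun j => (F i j)^2) (fun _ _ => sq_nonneg _) (Finset.mem_univ j)
  have h2 : ∑ j, (F i j)^2 ≤ ∑ i, ∑ j, (F i j)^2 :=
    Finset.single_le_sum (f := fun i => ∑ j, (F i j)^2)
      (fun _ _ => Finset.sum_nonneg fun _ _ => sq_nonneg _) (Finset.mem_univ i)
  exact h1.trans h2

lemma mnorm_nonneg (F : Mat3) : 0 ≤ mnorm F := Real.sqrt_nonneg _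

lemma pow_four_le {a p : ℝ} (ha : 0 ≤ a) (hp : 4 ≤ p) : a ^ 4 ≤ 1 + a ^ p := by
  rcases le_total a 1 with h | h
  · have := pow_le_one₀ ha h (n := 4)
    have := Real.rpow_nonneg ha p
    linarith
  · have h1 := Real.rpow_le_rpow_of_exponent_le h hp
    have h2 : a ^ (4:ℝ) = a ^ (4:ℕ) := by exact_mod_cast Real.rpow_natCast a 4
    rw [h2] at h1
    exact h1.trans (le_add_of_nonneg_left zero_le_one)

-- ENDHELPERS
/-- Appendix Lemma A.1(3), bound on the relative
strain-velocity product. -/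
theorem bound_relative_strain_velocity
    (ψ : Xi → ℝ → ℝ) (c p q r ℓ : ℝ)
    (hψ3 : PsiC3 ψ) (hgrow : GrowthCond ψ c p q r ℓ)
    (hp : 4 ≤ p) (hq : 1 < q) (hr : 1 < r) (hl : 1 < ℓ)
    (M δ : ℝ) (hM : 0 < M) (hδ : 0 < δ) :
    ∃ R C : ℝ, 0 < C ∧
      ∀ (ξ : Xi) (v : Vec3) (θ : ℝ), 0 < θ → ∀ U' ∈ Gamma M δ, ∀ α : Fin 3,
        (R < xiNorm p q r ξ + θ ^ ℓ + (vnorm v)^2 →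
          |∑ B : Idx, ∑ i, (dPhi B i α ξ.1 - dPhi B i α U'.1.1)
              * (v i - U'.2.1 i)|
            ≤ C * (xiNorm p q r ξ + θ ^ ℓ
                + (1/2) * (∑ i, (v i - U'.2.1 i)^2))) ∧
        (xiNorm p q r ξ + θ ^ ℓ + (vnorm v)^2 ≤ R →
          |∑ B : Idx, ∑ i, (dPhi B i α ξ.1 - dPhi B i α U'.1.1)
              * (v i - U'.2.1 i)|
            ≤ C * (mnorm (ξ.1 - U'.1.1)^2 + mnorm (ξ.2.1 - U'.1.2.1)^2
                + (ξ.2.2 - U'.1.2.2)^2 + (θ - U'.2.2)^2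
                + ∑ i, (v i - U'.2.1 i)^2)) := by
  have hM4 : 0 ≤ (1 + M) ^ 4 := by positivity
  refine ⟨2 * M ^ 2 + 2, 20805 * (8 * (1 + M) ^ 4 + 13) + 20805 * (1 + (2 * M ^ 2 + 3) + M),
    by positivity, ?_⟩
  intro ξ v θ hθ U' hU α
  obtain ⟨hG, -, -, hv', -, -⟩ := hU
  have ha := mnorm_nonneg ξ.1
  set a := mnorm ξ.1 with ha_def
  have hD0 : 0 ≤ ∑ i, (v i - U'.2.1 i)^2 := Finset.sum_nonneg fun _ _ => sq_nonneg _
  have hVi : ∀ i, |v i - U'.2.1 i| ≤ Real.sqrt (∑ i, (v i - U'.2.1 i)^2) := fun i =>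
    Real.abs_le_sqrt (Finset.single_le_sum (f := fun i => (v i - U'.2.1 i)^2)
      (fun _ _ => sq_nonneg _) (Finset.mem_univ i))
  have hV2 := Real.sq_sqrt hD0
  have hV0 := Real.sqrt_nonneg (∑ i, (v i - U'.2.1 i)^2)
  have hvv : (vnorm v)^2 ≤ 2 * (∑ i, (v i - U'.2.1 i)^2) + 2 * M ^ 2 := by
    have h1 : (vnorm U'.2.1)^2 ≤ M ^ 2 := pow_le_pow_left₀ (Real.sqrt_nonneg _) hv' 2
    have h2 : ∀ w : Vec3, (vnorm w)^2 = ∑ i, (w i)^2 := fun w =>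
      Real.sq_sqrt (Finset.sum_nonneg fun _ _ => sq_nonneg _)
    rw [h2] at h1 ⊢
    simp only [Fin.sum_univ_three] at h1 ⊢
    nlinarith [sq_nonneg (v 0 - 2 * U'.2.1 0), sq_nonneg (v 1 - 2 * U'.2.1 1),
      sq_nonneg (v 2 - 2 * U'.2.1 2)]
  set D := ∑ i, (v i - U'.2.1 i)^2 with hD_def
  set V := Real.sqrt D with hV_def
  have hθl : 0 ≤ θ ^ ℓ := Real.rpow_nonneg hθ.le _
  have hz : 0 ≤ mnorm ξ.2.1 ^ q := Real.rpow_nonneg (mnorm_nonneg _) _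
  have hw : 0 ≤ |ξ.2.2| ^ r := Real.rpow_nonneg (abs_nonneg _) _
  have h4 : a ^ 4 ≤ 1 + a ^ p := pow_four_le ha hp
  have hEdef : xiNorm p q r ξ = a ^ p + mnorm ξ.2.1 ^ q + |ξ.2.2| ^ r := rfl
  have hFe : ∀ i j, |ξ.1 i j| ≤ a := entry_le_mnorm ξ.1
  have hGe : ∀ i j, |U'.1.1 i j| ≤ M := fun i j => (entry_le_mnorm _ i j).trans hG
  constructor
  · intro hR
    have hd : ∀ i j, |ξ.1 i j - U'.1.1 i j| ≤ a + M := fun i j =>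
      (abs_sub _ _).trans (add_le_add (hFe i j) (hGe i j))
    refine (sum_bound ξ.1 U'.1.1 a M (a + M) V hFe hGe hd v U'.2.1 hVi α).trans ?_
    set E := xiNorm p q r ξ + θ ^ ℓ with hE_def
    have hEa : a ^ 4 ≤ 1 + E := by linarith
    have hE0 : 0 ≤ E := by have := Real.rpow_nonneg ha p; linarith
    have h1 : 1 ≤ 2 * (E + 1/2 * D) := by linarith
    set T := E + 1/2 * D with hT
    have hb1 : (1 + a + M) * (a + M) ≤ (1 + M + a) ^ 2 := by nlinarith
    have hb2 : (1 + a + M) * (a + M) * V ≤ (1 + M + a) ^ 2 * V :=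
      mul_le_mul_of_nonneg_right hb1 hV0
    have hb3 : (1 + M + a) ^ 2 * V ≤ 1/2 * ((1 + M + a) ^ 4 + D) := by
      nlinarith [sq_nonneg ((1 + M + a) ^ 2 - V)]
    have hb4 : (1 + M + a) ^ 4 ≤ 8 * ((1 + M) ^ 4 + a ^ 4) := by
      have := add_pow_le (by positivity : 0 ≤ 1 + M) ha 4
      norm_num at this
      linarith
    have hb5 : (1 + M) ^ 4 * 1 ≤ (1 + M) ^ 4 * (2 * T) := mul_le_mul_of_nonneg_left h1 hM4
    have hT0 : 0 ≤ T := by linarith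
    have hextra : 0 ≤ 20805 * (1 + (2 * M ^ 2 + 3) + M) * T := by positivity
    have : (1 + a + M) * (a + M) * V ≤ (8 * (1 + M) ^ 4 + 13) * T := by
      have : D ≤ 2 * T := by linarith
      have : E ≤ T := by linarith
      linarith
    linarith
  · intro hR
    have hap : a ^ p ≤ 2 * M ^ 2 + 2 := by
      have := sq_nonneg (vnorm v)
      linarith
    have haA : a ≤ 2 * M ^ 2 + 3 := by
      nlinarith [sq_nonneg (a ^ 2 - 1), sq_nonneg (a - 1)]
    have hd : ∀ i j, |ξ.1 i j - U'.1.1 i j| ≤ mnorm (ξ.1 - U'.1.1) := fun i j =>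
      entry_le_mnorm (ξ.1 - U'.1.1) i j
    refine (sum_bound ξ.1 U'.1.1 a M _ V hFe hGe hd v U'.2.1 hVi α).trans ?_
    have hd0 := mnorm_nonneg (ξ.1 - U'.1.1)
    set d := mnorm (ξ.1 - U'.1.1) with hd_def
    have hz2 := sq_nonneg (mnorm (ξ.2.1 - U'.1.2.1))
    have hw2 := sq_nonneg (ξ.2.2 - U'.1.2.2)
    have ht2 := sq_nonneg (θ - U'.2.2)
    set S := d ^ 2 + mnorm (ξ.2.1 - U'.1.2.1)^2
                + (ξ.2.2 - U'.1.2.2)^2 + (θ - U'.2.2)^2 + D with hS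
    have hdV : d * V ≤ S := by nlinarith [sq_nonneg (d - V), mul_nonneg hd0 hV0]
    have hS0 : 0 ≤ S := (mul_nonneg hd0 hV0).trans hdV
    have h1 : (1 + a + M) * d * V ≤ (1 + (2 * M ^ 2 + 3) + M) * S := by
      rw [mul_assoc]
      exact mul_le_mul (by linarith) hdV (mul_nonneg hd0 hV0) (by positivity)
    have hextra : 0 ≤ 20805 * (8 * (1 + M) ^ 4 + 13) * S := by positivity
    linarith

end
end
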